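/- (Theorem 1, Euclidean form.) Fix M ∈ ℕ and work in M-dimensional Euclidean space with the Euclidean distance d. Let z, z̃, z_q ∈ ℝ^M satisfy d(z̃, z_q) ≤ d(z̃, z), and let b ≥ 0 be a real number. Then b² ≤ 5·((d(z, z_q) − b)² + d(z, z̃)²). -/

import Mathlib

theorem mul_add_mul_sq_le_sq_add_sq_mul_sq_add_sq {R : Type*} [CommRing R] [LinearOrder R]
    [IsStrictOrderedRing R] (a b u v : R) :
    (a * u + b * v) ^ 2 ≤ (a ^ 2 + b ^ 2) * (u ^ 2 + v ^ 2) := by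
  have lagrange_identity :
      (a ^ 2 + b ^ 2) * (u ^ 2 + v ^ 2) = (a * u + b * v) ^ 2 + (a * v - b * u) ^ 2 := by ring
  rw [lagrange_identity]
  exact le_add_of_nonneg_right (sq_nonneg _)

theorem dist_le_two_mul_dist_of_dist_le {X : Type*} [PseudoMetricSpace X] {x y w : X}
    (h : dist y w ≤ dist y x) : dist x w ≤ 2 * dist x y := by
  calc
    dist x w ≤ dist x y + dist y w := dist_triangle x y w
    _ ≤ dist x y + dist y x := by gcongr
    _ = 2 * dist x y := by rw [dist_comm y x, two_mul]

theorem thm1_euclidean_general {X : Type*} [PseudoMetricSpace X] {z ztil zq : X}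
    (h : dist ztil zq ≤ dist ztil z) (b : ℝ) :
    b ^ 2 ≤ 5 * ((dist z zq - b) ^ 2 + dist z ztil ^ 2) := by
  have abs_cost_le : |b| ≤ |dist z zq - b| + 2 * dist z ztil := by
    calc
      |b| = |dist z zq - (dist z zq - b)| := by rw [sub_sub_cancel]
      _ ≤ |dist z zq| + |dist z zq - b| := abs_sub _ _
      _ = |dist z zq - b| + dist z zq := by rw [abs_dist, add_comm]
      _ ≤ |dist z zq - b| + 2 * dist z ztil := by
        gcongr
        exact dist_le_two_mul_dist_of_dist_le h
  -- Cauchy–Schwarz against the coefficient vector `(1, 2)` gives the constant `5 = 1² + 2²`.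
  calc
    b ^ 2 = |b| ^ 2 := (sq_abs b).symm
    _ ≤ (1 * |dist z zq - b| + 2 * dist z ztil) ^ 2 := by
      rw [one_mul]
      gcongr
    _ ≤ (1 ^ 2 + 2 ^ 2) * (|dist z zq - b| ^ 2 + dist z ztil ^ 2) :=
      mul_add_mul_sq_le_sq_add_sq_mul_sq_add_sq _ _ _ _
    _ = 5 * ((dist z zq - b) ^ 2 + dist z ztil ^ 2) := by
      rw [sq_abs]
      norm_num

theorem thm1_euclidean (M : ℕ) (z ztil zq : EuclideanSpace ℝ (Fin M))
    (h : dist ztil zq ≤ dist ztil z) (b : ℝ) (hb : 0 ≤ b) :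
    b ^ 2 ≤ 5 * ((dist z zq - b) ^ 2 + dist z ztil ^ 2) :=
  thm1_euclidean_general h b
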